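/- arXiv:2206.01816 — 4 statements merged into one kernel-verified Lean document; each statement's English description precedes it below -/
import Mathlib

section
/- Let X be a nonempty finite set, let p : X → ℝ and ξ : X → ℝ be probability distributions on X with p(x) > 0 and ξ(x) > 0 for all x ∈ X, and let Z̄ > 0 and m > 0 be real numbers. For q : X → ℝ with q(x) > 0 for all x, define the generalized NCE loss L_{Z̄}(q) = −∑_{x∈X} p(x)·log( q(x)/(q(x) + Z̄·m·ξ(x)) ) − m·∑_{x∈X} ξ(x)·log( Z̄·m·ξ(x)/(q(x) + Z̄·m·ξ(x)) ). Then the function q* defined by q*(x) = Z̄·p(x) is the unique global minimizer of L_{Z̄} over all strictly positive q : X → ℝ; that is, L_{Z̄}(Z̄·p) ≤ L_{Z̄}(q) for all positive q, with equality if and only if q = Z̄·p. -/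
theorem nce_aux (a k m Z q : ℝ) (ha : 0 < a) (hk : 0 < k) (hm : 0 < m) (hZ : 0 < Z)
    (hq : 0 < q) (hne : q ≠ Z * a) :
    -(a * Real.log (Z * a / (Z * a + Z * m * k)))
      - m * (k * Real.log (Z * m * k / (Z * a + Z * m * k))) <
    -(a * Real.log (q / (q + Z * m * k)))
      - m * (k * Real.log (Z * m * k / (q + Z * m * k))) := by
  have hB : 0 < Z * m * k := by positivity
  have hA : 0 < Z * a := by positivity
  have hd : 0 < q + Z * m * k := by positivity
  have hD : 0 < Z * a + Z * m * k := by positivity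
  have h1 := Real.log_le_sub_one_of_pos
    (x := (q / (q + Z * m * k)) / (Z * a / (Z * a + Z * m * k))) (by positivity)
  have h2 := Real.log_lt_sub_one_of_pos
    (x := (Z * m * k / (q + Z * m * k)) / (Z * m * k / (Z * a + Z * m * k))) (by positivity)
    (by
      intro h
      apply hne
      field_simp at h
      nlinarith)
  rw [Real.log_div (by positivity) (by positivity)] at h1 h2
  have h1' := mul_le_mul_of_nonneg_left h1 ha.le
  have h2' := mul_lt_mul_of_pos_left h2 (mul_pos hm hk)
  have key : a * ((q / (q + Z * m * k)) / (Z * a / (Z * a + Z * m * k)) - 1)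
      + m * k * ((Z * m * k / (q + Z * m * k)) / (Z * m * k / (Z * a + Z * m * k)) - 1) = 0 := by
    field_simp
    ring
  linarith

/-- Generalized NCE (Corollary 1): with fixed normalization constant `Z̄ > 0`, the
generalized NCE loss over a finite space is uniquely minimized at `q = Z̄ • p`. -/
theorem stmt_1 {X : Type*} [Fintype X] [Nonempty X]
    (p ξ : X → ℝ) (hp : ∀ x, 0 < p x) (hξ : ∀ x, 0 < ξ x)
    (hp1 : ∑ x, p x = 1) (hξ1 : ∑ x, ξ x = 1)
    (Z m : ℝ) (hZ : 0 < Z) (hm : 0 < m)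
    (L : (X → ℝ) → ℝ)
    (hL : ∀ q, L q =
      -∑ x, p x * Real.log (q x / (q x + Z * m * ξ x))
      - m * ∑ x, ξ x * Real.log (Z * m * ξ x / (q x + Z * m * ξ x))) :
    ∀ q : X → ℝ, (∀ x, 0 < q x) →
      L (fun x => Z * p x) ≤ L q ∧
      (L (fun x => Z * p x) = L q ↔ q = fun x => Z * p x) := by
  have hS : ∀ q, L q = ∑ x, (-(p x * Real.log (q x / (q x + Z * m * ξ x)))
      - m * (ξ x * Real.log (Z * m * ξ x / (q x + Z * m * ξ x)))) := by
    intro q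
    rw [hL, Finset.sum_sub_distrib, Finset.sum_neg_distrib, Finset.mul_sum]
  intro q hq
  by_cases h : q = fun x => Z * p x
  · subst h
    simp
  · have hlt : L (fun x => Z * p x) < L q := by
      rw [hS, hS]
      obtain ⟨y, hy⟩ := Function.ne_iff.mp h
      refine Finset.sum_lt_sum (fun x _ => ?_) ⟨y, Finset.mem_univ y,
        nce_aux _ _ _ _ _ (hp y) (hξ y) hm hZ (hq y) hy⟩
      by_cases hx : q x = Z * p x
      · simp only [hx]
        exact le_rfl
      · exact (nce_aux _ _ _ _ _ (hp x) (hξ x) hm hZ (hq x) hx).le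
    exact ⟨hlt.le, fun e => absurd e hlt.ne, fun e => absurd e h⟩
end

section
/- Let X be a nonempty finite set, let p : X → ℝ and ξ : X → ℝ be probability distributions on X with p(x) > 0 and ξ(x) > 0 for all x ∈ X, and let m > 0 be a real number. For q : X → ℝ with q(x) > 0 for all x, define the NCE loss L(q) = −∑_{x∈X} p(x)·log( q(x)/(q(x) + m·ξ(x)) ) − m·∑_{x∈X} ξ(x)·log( m·ξ(x)/(q(x) + m·ξ(x)) ). Then p itself is the unique global minimizer of L over all strictly positive q : X → ℝ; that is, L(p) ≤ L(q) for all positive q, with equality if and only if q = p. -/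
theorem nce_pointwise (a b q : ℝ) (ha : 0 < a) (hb : 0 < b) (hq : 0 < q) (hne : q ≠ a) :
    a * Real.log (q / (q + b)) + b * Real.log (b / (q + b))
      < a * Real.log (a / (a + b)) + b * Real.log (b / (a + b)) := by
  have hu : 0 < q * (a + b) / (a * (q + b)) := by positivity
  have hv : 0 < (a + b) / (q + b) := by positivity
  have hv1 : (a + b) / (q + b) ≠ 1 := by
    intro h
    rw [div_eq_one_iff_eq (by positivity)] at h
    exact hne (by linarith)
  have e1 : Real.log (q / (q + b))
      = Real.log (q * (a + b) / (a * (q + b))) + Real.log (a / (a + b)) := by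
    rw [← Real.log_mul hu.ne' (by positivity)]
    congr 1
    field_simp
  have e2 : Real.log (b / (q + b)) = Real.log ((a + b) / (q + b)) + Real.log (b / (a + b)) := by
    rw [← Real.log_mul hv.ne' (by positivity)]
    congr 1
    field_simp
  have h1 := mul_le_mul_of_nonneg_left (Real.log_le_sub_one_of_pos hu) ha.le
  have h2 := mul_lt_mul_of_pos_left (Real.log_lt_sub_one_of_pos hv hv1) hb
  have h3 : a * (q * (a + b) / (a * (q + b)) - 1) + b * ((a + b) / (q + b) - 1) = 0 := by
    field_simp
    ring
  rw [e1, e2]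
  linarith

/-- NCE consistency (Theorem 1, finite-space version): the NCE loss over a finite
space is uniquely minimized at the data distribution `p` itself. -/
theorem stmt_2 {X : Type*} [Fintype X] [Nonempty X]
    (p ξ : X → ℝ) (hp : ∀ x, 0 < p x) (hξ : ∀ x, 0 < ξ x)
    (hp1 : ∑ x, p x = 1) (hξ1 : ∑ x, ξ x = 1)
    (m : ℝ) (hm : 0 < m)
    (L : (X → ℝ) → ℝ)
    (hL : ∀ q, L q =
      -∑ x, p x * Real.log (q x / (q x + m * ξ x))
      - m * ∑ x, ξ x * Real.log (m * ξ x / (q x + m * ξ x))) :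
    ∀ q : X → ℝ, (∀ x, 0 < q x) →
      L p ≤ L q ∧ (L p = L q ↔ q = p) := by
  intro q hq
  have hL2 : ∀ q, L q = -∑ x, (p x * Real.log (q x / (q x + m * ξ x))
      + (m * ξ x) * Real.log (m * ξ x / (q x + m * ξ x))) := by
    intro q
    rw [hL, Finset.sum_add_distrib, Finset.mul_sum]
    simp only [mul_assoc]
    ring
  have key : q ≠ p → L p < L q := by
    intro hne
    obtain ⟨x, hx⟩ := Function.ne_iff.mp hne
    rw [hL2, hL2, neg_lt_neg_iff]
    refine Finset.sum_lt_sum (fun y _ => ?_) ⟨x, Finset.mem_univ x, ?_⟩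
    · by_cases h : q y = p y
      · rw [h]
      · exact (nce_pointwise _ _ _ (hp y) (mul_pos hm (hξ y)) (hq y) h).le
    · exact nce_pointwise _ _ _ (hp x) (mul_pos hm (hξ x)) (hq x) hx
  by_cases h : q = p
  · subst h
    simp
  · exact ⟨(key h).le, fun e => absurd e (key h).ne, fun e => absurd e h⟩
end

section
/- Let X be a nonempty finite set with |X| = N, let p : X → ℝ be a probability distribution on X with p(x) > 0 for all x, and let m > 0 be a real number. Define the NEG loss for q : X → ℝ with q(x) > 0 by L^{NEG}(q) = −∑_{x∈X} p(x)·log( q(x)/(q(x) + 1) ) − (m/N)·∑_{x∈X} log( 1 − q(x)/(q(x) + 1) ). Then the function q* defined by q*(x) = (N/m)·p(x) is the unique global minimizer of L^{NEG} over all strictly positive q : X → ℝ. -/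
theorem neg_pointwise {a c t s : ℝ} (ha : 0 < a) (hc : 0 < c) (ht : 0 < t) (hs : s = a / c)
    (hne : t ≠ s) :
    -(a * Real.log (s / (s + 1))) - c * Real.log (1 - s / (s + 1)) <
      -(a * Real.log (t / (t + 1))) - c * Real.log (1 - t / (t + 1)) := by
  have hs0 : 0 < s := by rw [hs]; positivity
  have hac : a = s * c := by rw [hs]; field_simp
  have e : ∀ r : ℝ, 0 < r → 1 - r / (r + 1) = 1 / (r + 1) := by
    intro r hr
    field_simp
    ring
  rw [e s hs0, e t ht]
  have h1 : Real.log ((t / (t + 1)) / (s / (s + 1))) < (t / (t + 1)) / (s / (s + 1)) - 1 := by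
    apply Real.log_lt_sub_one_of_pos (by positivity)
    intro h
    apply hne
    field_simp at h
    linarith
  have h2 : Real.log ((1 / (t + 1)) / (1 / (s + 1))) ≤ (1 / (t + 1)) / (1 / (s + 1)) - 1 :=
    Real.log_le_sub_one_of_pos (by positivity)
  rw [Real.log_div (by positivity) (by positivity)] at h1 h2
  have h3 := mul_lt_mul_of_pos_left h1 ha
  have h4 := mul_le_mul_of_nonneg_left h2 hc.le
  have h5 : a * ((t / (t + 1)) / (s / (s + 1)) - 1) + c * ((1 / (t + 1)) / (1 / (s + 1)) - 1)
      = 0 := by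
    rw [hac]
    field_simp
    ring
  linarith

/-- NEG learns a scaled data distribution: the NEG loss with uniform noise is
uniquely minimized at `q* = (N/m) • p`. -/
theorem stmt_4 {X : Type*} [Fintype X] [Nonempty X] (N : ℕ) (hN : Fintype.card X = N)
    (p : X → ℝ) (hp : ∀ x, 0 < p x) (hp1 : ∑ x, p x = 1)
    (m : ℝ) (hm : 0 < m)
    (L : (X → ℝ) → ℝ)
    (hL : ∀ q, L q = -∑ x, p x * Real.log (q x / (q x + 1))
        - (m / (N : ℝ)) * ∑ x, Real.log (1 - q x / (q x + 1))) :
    ∀ q : X → ℝ, (∀ x, 0 < q x) →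
      L (fun x => ((N : ℝ) / m) * p x) ≤ L q ∧
      (L (fun x => ((N : ℝ) / m) * p x) = L q ↔ q = fun x => ((N : ℝ) / m) * p x) := by
  intro q hq
  have hN0 : (0 : ℝ) < N := by
    rw [← hN]
    exact_mod_cast Fintype.card_pos
  have hc : 0 < m / (N : ℝ) := by positivity
  have hL' : ∀ q, L q = ∑ x, (-(p x * Real.log (q x / (q x + 1)))
      - (m / (N : ℝ)) * Real.log (1 - q x / (q x + 1))) := by
    intro q
    rw [hL, Finset.sum_sub_distrib, Finset.sum_neg_distrib, Finset.mul_sum]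
  have hs : ∀ x, (N : ℝ) / m * p x = p x / (m / (N : ℝ)) := by
    intro x
    field_simp
  have key : q ≠ (fun x => ((N : ℝ) / m) * p x) → L (fun x => ((N : ℝ) / m) * p x) < L q := by
    intro hne
    obtain ⟨y, hy⟩ := Function.ne_iff.mp hne
    rw [hL', hL']
    refine Finset.sum_lt_sum (fun x _ => ?_)
      ⟨y, Finset.mem_univ y, neg_pointwise (hp y) hc (hq y) (hs y) hy⟩
    by_cases hx : q x = (N : ℝ) / m * p x
    · rw [hx]
    · exact (neg_pointwise (hp x) hc (hq x) (hs x) hx).le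
  by_cases h : q = fun x => ((N : ℝ) / m) * p x
  · rw [← h]
    simp
  · exact ⟨(key h).le, fun h' => absurd h' (key h).ne, fun h' => absurd h' h⟩
end

section
/- Let X be a nonempty finite set, let p : X → ℝ and ξ : X → ℝ be probability distributions with ξ(x) > 0 for all x, let m > 0 and let Z > 0 be a fixed real number. Let φ : ℝ → X → ℝ be such that for every x ∈ X the map θ ↦ φ_θ(x) is differentiable at θ₀ ∈ ℝ with derivative φ′_{θ₀}(x) and φ_{θ₀}(x) > 0, and set q_θ(x) = φ_θ(x)/Z. Then the NCE loss L(θ) = −∑_{x∈X} p(x)·log( q_θ(x)/(q_θ(x) + m·ξ(x)) ) − m·∑_{x∈X} ξ(x)·log( m·ξ(x)/(q_θ(x) + m·ξ(x)) ) is differentiable at θ₀ with derivative L′(θ₀) = −∑_{x∈X} ( p(x)/q_{θ₀}(x) − 1 ) · ( m·ξ(x)/(q_{θ₀}(x) + m·ξ(x)) ) · ( 1/Z ) · φ′_{θ₀}(x). -/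
/-- Gradient of the NCE loss: for the model `q_θ x = φ_θ x / Z` with fixed `Z > 0`,
the NCE loss has derivative
`-∑ x, (p x / q_{θ₀} x - 1) · (m ξ x / (q_{θ₀} x + m ξ x)) · (1/Z) · φ'_{θ₀} x`. -/
theorem stmt_13 {X : Type*} [Fintype X] [Nonempty X]
    (p ξ : X → ℝ) (hp0 : ∀ x, 0 ≤ p x) (hp1 : ∑ x, p x = 1)
    (hξ : ∀ x, 0 < ξ x) (hξ1 : ∑ x, ξ x = 1)
    (m Z : ℝ) (hm : 0 < m) (hZ : 0 < Z)
    (φ : ℝ → X → ℝ) (φ' : X → ℝ) (θ₀ : ℝ)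
    (hderiv : ∀ x, HasDerivAt (fun θ => φ θ x) (φ' x) θ₀)
    (hpos : ∀ x, 0 < φ θ₀ x) :
    HasDerivAt (fun θ =>
        -∑ x, p x * Real.log ((φ θ x / Z) / (φ θ x / Z + m * ξ x))
        - m * ∑ x, ξ x * Real.log (m * ξ x / (φ θ x / Z + m * ξ x)))
      (-∑ x, (p x / (φ θ₀ x / Z) - 1) * (m * ξ x / (φ θ₀ x / Z + m * ξ x))
          * (1 / Z) * φ' x) θ₀ := by
  have h1 : ∀ x, HasDerivAt (fun θ => p x * Real.log ((φ θ x / Z) / (φ θ x / Z + m * ξ x)))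
      (p x / (φ θ₀ x / Z) * (m * ξ x / (φ θ₀ x / Z + m * ξ x)) * (1 / Z) * φ' x) θ₀ := by
    intro x
    have hq : 0 < φ θ₀ x / Z := div_pos (hpos x) hZ
    have hk : 0 < m * ξ x := mul_pos hm (hξ x)
    have hs : φ θ₀ x / Z + m * ξ x ≠ 0 := (add_pos hq hk).ne'
    have hd := (hderiv x).div_const Z
    have h := ((hd.fun_div (hd.add_const (m * ξ x)) hs).log
      (div_ne_zero hq.ne' hs)).const_mul (p x)
    refine h.congr_deriv ?_
    have e : φ θ₀ x = (φ θ₀ x / Z) * Z := by field_simp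
    have hZ' := hZ.ne'
    generalize φ θ₀ x / Z = q at *
    generalize m * ξ x = k at *
    have hq' := hq.ne'
    field_simp
    ring
  have h2 : ∀ x, HasDerivAt (fun θ => ξ x * Real.log (m * ξ x / (φ θ x / Z + m * ξ x)))
      (-(ξ x * (1 / (φ θ₀ x / Z + m * ξ x)) * (1 / Z) * φ' x)) θ₀ := by
    intro x
    have hq : 0 < φ θ₀ x / Z := div_pos (hpos x) hZ
    have hk : 0 < m * ξ x := mul_pos hm (hξ x)
    have hs : φ θ₀ x / Z + m * ξ x ≠ 0 := (add_pos hq hk).ne'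
    have hd := (hderiv x).div_const Z
    have h := (((hasDerivAt_const θ₀ (m * ξ x)).fun_div (hd.add_const (m * ξ x)) hs).log
      (div_ne_zero hk.ne' hs)).const_mul (ξ x)
    refine h.congr_deriv ?_
    have hZ' := hZ.ne'
    generalize φ θ₀ x / Z = q at *
    generalize m * ξ x = k at *
    have hk' := hk.ne'
    field_simp
    ring
  have h := (HasDerivAt.fun_sum (u := Finset.univ) (fun x _ => h1 x)).fun_neg.fun_sub
    ((HasDerivAt.fun_sum (u := Finset.univ) (fun x _ => h2 x)).const_mul m)
  refine h.congr_deriv ?_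
  rw [Finset.mul_sum, ← Finset.sum_neg_distrib, ← Finset.sum_neg_distrib,
    ← Finset.sum_sub_distrib]
  refine Finset.sum_congr rfl fun x _ => ?_
  ring
end
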